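/- arXiv:1803.08522 — 5 statements merged into one kernel-verified Lean document; each statement's English description precedes it below -/
import Mathlib

section
/- Let K ⊆ ℝⁿ be a closed set, let x ∈ Kᶜ and let φ ∈ ℝⁿ be a unit vector. If r₁, r₂ > 0 satisfy x + r₁φ ∈ Kᶜ, x + r₂φ ∈ Kᶜ and l^φ_x(r₁) = l^φ_x(r₂), then r₁ = r₂. -/
open MeasureTheory

/-- `ell K x φ r = ∫₀^r 1_{Kᶜ}(x + tφ) dt`, the length of the segment from `x` to
`x + rφ` lying outside `K`. -/
noncomputable def ell {n : ℕ} (K : Set (EuclideanSpace ℝ (Fin n)))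
    (x φ : EuclideanSpace ℝ (Fin n)) (r : ℝ) : ℝ :=
  ∫ t in (0:ℝ)..r, Set.indicator Kᶜ (fun _ => (1:ℝ)) (x + t • φ)

theorem ell_lt_aux {n : ℕ} (K : Set (EuclideanSpace ℝ (Fin n))) (hK : IsClosed K)
    (x φ : EuclideanSpace ℝ (Fin n)) (a b : ℝ) (hab : a < b)
    (hb : x + b • φ ∈ Kᶜ) : ell K x φ a < ell K x φ b := by
  have hcont : Continuous (fun t : ℝ => x + t • φ) := by fun_prop
  have hopen : IsOpen ((fun t : ℝ => x + t • φ) ⁻¹' Kᶜ) := hK.isOpen_compl.preimage hcont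
  have hmeas : Measurable (fun t : ℝ => Set.indicator Kᶜ (fun _ => (1:ℝ)) (x + t • φ)) :=
    (measurable_const.indicator hK.isOpen_compl.measurableSet).comp hcont.measurable
  have hint : ∀ u v : ℝ, IntervalIntegrable
      (fun t : ℝ => Set.indicator Kᶜ (fun _ => (1:ℝ)) (x + t • φ)) volume u v := by
    intro u v
    refine (intervalIntegrable_const (c := (1:ℝ))).mono_fun hmeas.aestronglyMeasurable ?_
    refine Filter.Eventually.of_forall fun t => ?_
    by_cases ht : x + t • φ ∈ Kᶜ
    · simp only [Set.indicator_of_mem ht]; exact le_rfl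
    · simp only [Set.indicator_of_notMem ht]; simp
  obtain ⟨ε, hε, hball⟩ := Metric.isOpen_iff.1 hopen b hb
  obtain ⟨c, hc1, hc2⟩ : ∃ c, max a (b - ε) < c ∧ c < b :=
    exists_between (max_lt hab (by linarith))
  have hac : a < c := lt_of_le_of_lt (le_max_left _ _) hc1
  have hec : b - ε < c := lt_of_le_of_lt (le_max_right _ _) hc1
  have e1 : ell K x φ a + (∫ t in a..c, Set.indicator Kᶜ (fun _ => (1:ℝ)) (x + t • φ))
      = ell K x φ c := intervalIntegral.integral_add_adjacent_intervals (hint _ _) (hint _ _)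
  have e2 : ell K x φ c + (∫ t in c..b, Set.indicator Kᶜ (fun _ => (1:ℝ)) (x + t • φ))
      = ell K x φ b := intervalIntegral.integral_add_adjacent_intervals (hint _ _) (hint _ _)
  have e3 : 0 ≤ ∫ t in a..c, Set.indicator Kᶜ (fun _ => (1:ℝ)) (x + t • φ) :=
    intervalIntegral.integral_nonneg hac.le fun t _ =>
      Set.indicator_nonneg (fun _ _ => zero_le_one) _
  have e4 : (∫ t in c..b, Set.indicator Kᶜ (fun _ => (1:ℝ)) (x + t • φ)) = b - c := by
    have : (∫ t in c..b, Set.indicator Kᶜ (fun _ => (1:ℝ)) (x + t • φ))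
        = ∫ t in c..b, (1:ℝ) := by
      refine intervalIntegral.integral_congr fun t ht => ?_
      rw [Set.uIcc_of_le hc2.le] at ht
      have hm : x + t • φ ∈ Kᶜ := hball (by
        rw [Metric.mem_ball, Real.dist_eq, abs_lt]
        constructor <;> linarith [ht.1, ht.2])
      simp only [Set.indicator_of_mem hm]
    rw [this]; simp
  linarith

theorem ell_injective {n : ℕ} (K : Set (EuclideanSpace ℝ (Fin n))) (hK : IsClosed K)
    (x φ : EuclideanSpace ℝ (Fin n)) (hx : x ∈ Kᶜ) (hφ : ‖φ‖ = 1)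
    (r₁ r₂ : ℝ) (hr₁ : 0 < r₁) (hr₂ : 0 < r₂)
    (h₁ : x + r₁ • φ ∈ Kᶜ) (h₂ : x + r₂ • φ ∈ Kᶜ)
    (h : ell K x φ r₁ = ell K x φ r₂) :
    r₁ = r₂ := by
  rcases lt_trichotomy r₁ r₂ with hlt | heq | hgt
  · exact absurd h (ell_lt_aux K hK x φ r₁ r₂ hlt h₂).ne
  · exact heq
  · exact absurd h (ell_lt_aux K hK x φ r₂ r₁ hgt h₁).ne'
end

section
/- If K ⊆ ℝⁿ is a closed set and x ∈ Kᶜ, then the restriction of the map T^K_x to Kᶜ is injective. -/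
open MeasureTheory

-- The map `T^K_x`, sending `x + rφ` (with `r > 0`, `‖φ‖ = 1`) to `x + l^φ_x(r)·φ`,
-- and fixing `x`.
open Classical in
noncomputable def Tmap {n : ℕ} (K : Set (EuclideanSpace ℝ (Fin n)))
    (x y : EuclideanSpace ℝ (Fin n)) : EuclideanSpace ℝ (Fin n) :=
  if y = x then x
  else x + (ell K x (‖y - x‖⁻¹ • (y - x)) ‖y - x‖) • (‖y - x‖⁻¹ • (y - x))

theorem ell_pos_aux {n : ℕ} (K : Set (EuclideanSpace ℝ (Fin n))) (hK : IsClosed K)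
    (x φ : EuclideanSpace ℝ (Fin n)) (b : ℝ) (hab : 0 < b) (hb : x + b • φ ∈ Kᶜ) :
    0 < ell K x φ b := by
  have h := ell_lt_aux K hK x φ 0 b hab hb
  simpa [ell] using h

theorem Tmap_polar_aux {n : ℕ} (K : Set (EuclideanSpace ℝ (Fin n))) (hK : IsClosed K)
    (x y : EuclideanSpace ℝ (Fin n)) (hy : y ∈ Kᶜ) (hyx : y ≠ x) :
    ∃ (φ : EuclideanSpace ℝ (Fin n)) (r : ℝ), ‖φ‖ = 1 ∧ 0 < r ∧ y = x + r • φ ∧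
      0 < ell K x φ r ∧ Tmap K x y = x + ell K x φ r • φ := by
  have h0 : ‖y - x‖ ≠ 0 := norm_ne_zero_iff.2 (sub_ne_zero.2 hyx)
  have hp : 0 < ‖y - x‖ := norm_pos_iff.2 (sub_ne_zero.2 hyx)
  have he : y = x + ‖y - x‖ • (‖y - x‖⁻¹ • (y - x)) := by
    rw [smul_smul, mul_inv_cancel₀ h0, one_smul]
    abel
  refine ⟨‖y - x‖⁻¹ • (y - x), ‖y - x‖, ?_, hp, he, ?_, ?_⟩
  · rw [norm_smul, norm_inv, norm_norm, inv_mul_cancel₀ h0]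
  · exact ell_pos_aux K hK x _ _ hp (he ▸ hy)
  · simp only [Tmap, if_neg hyx]

theorem Tmap_injOn {n : ℕ} (K : Set (EuclideanSpace ℝ (Fin n))) (hK : IsClosed K)
    (x : EuclideanSpace ℝ (Fin n)) (hx : x ∈ Kᶜ) :
    Set.InjOn (Tmap K x) Kᶜ := by
  have hxx : Tmap K x x = x := by simp [Tmap]
  have hne : ∀ y ∈ Kᶜ, y ≠ x → Tmap K x y ≠ x := by
    intro y hy hyx h
    obtain ⟨φ, r, hφ, hr, -, hl, hT⟩ := Tmap_polar_aux K hK x y hy hyx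
    rw [hT, add_eq_left, smul_eq_zero] at h
    rcases h with h | h
    · exact hl.ne' h
    · simp [h] at hφ
  intro y hy z hz hyz
  by_cases h1 : y = x
  · by_contra h2
    subst h1
    exact hne z hz (Ne.symm h2) (hyz ▸ hxx)
  by_cases h2 : z = x
  · subst h2
    exact absurd (hyz.trans hxx) (hne y hy h1)
  obtain ⟨φ, r, hφ, hr, hyr, hl, hT⟩ := Tmap_polar_aux K hK x y hy h1
  obtain ⟨ψ, s, hψ, hs, hzs, hl', hT'⟩ := Tmap_polar_aux K hK x z hz h2
  rw [hT, hT'] at hyz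
  have h3 := add_left_cancel hyz
  have h4 : ell K x φ r = ell K x ψ s := by
    have := congrArg norm h3
    rwa [norm_smul, norm_smul, hφ, hψ, mul_one, mul_one, Real.norm_of_nonneg hl.le,
      Real.norm_of_nonneg hl'.le] at this
  have h5 : φ = ψ := by
    rw [← h4] at h3
    exact smul_right_injective _ hl.ne' h3
  subst h5
  have h6 : r = s := by
    rcases lt_trichotomy r s with h | h | h
    · exact absurd h4 (ell_lt_aux K hK x φ r s h (hzs ▸ hz)).ne
    · exact h
    · exact absurd h4 (ell_lt_aux K hK x φ s r h (hyr ▸ hy)).ne'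
  rw [hyr, hzs, h6]
end

section
/- Let K ⊆ ℝⁿ be a closed set and let q : ℝⁿ → [0, ∞) be a symmetric function, i.e. q(z) = q(−z) for all z ∈ ℝⁿ. Then the ghost density is symmetric on Kᶜ: for all x, y ∈ Kᶜ, q_K(x, y) = q_K(y, x). -/
open MeasureTheory

-- The ghost density `q_K(x, x + rφ) = q(l^φ_x(r)·φ)·(l^φ_x(r)/r)^(n-1)·1_{Kᶜ}(x + rφ)`
-- for `r > 0` and unit vectors `φ`, with `q_K(x, x) = q 0`.
open Classical in
noncomputable def ghost {n : ℕ} (K : Set (EuclideanSpace ℝ (Fin n)))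
    (q : EuclideanSpace ℝ (Fin n) → ℝ)
    (x y : EuclideanSpace ℝ (Fin n)) : ℝ :=
  if y = x then q 0
  else
    q ((ell K x (‖y - x‖⁻¹ • (y - x)) ‖y - x‖) • (‖y - x‖⁻¹ • (y - x)))
      * (ell K x (‖y - x‖⁻¹ • (y - x)) ‖y - x‖ / ‖y - x‖) ^ (n - 1)
      * Set.indicator Kᶜ (fun _ => (1:ℝ)) y

theorem ell_symm_aux {n : ℕ} (K : Set (EuclideanSpace ℝ (Fin n)))
    (x y : EuclideanSpace ℝ (Fin n)) (h : y ≠ x) :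
    ell K x (‖y - x‖⁻¹ • (y - x)) ‖y - x‖ = ell K y (‖x - y‖⁻¹ • (x - y)) ‖x - y‖ := by
  have hr : ‖y - x‖ ≠ 0 := norm_ne_zero_iff.mpr (sub_ne_zero.mpr h)
  rw [norm_sub_rev x y]
  unfold ell
  have key := intervalIntegral.integral_comp_sub_left (a := 0) (b := ‖y - x‖)
    (fun t : ℝ => Set.indicator Kᶜ (fun _ => (1:ℝ)) (x + t • (‖y - x‖⁻¹ • (y - x)))) ‖y - x‖
  rw [sub_self, sub_zero] at key
  rw [← key]
  congr 1
  funext t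
  congr 1
  rw [sub_smul, smul_inv_smul₀ hr, ← neg_sub y x, smul_neg, smul_neg]
  abel

theorem ghost_symm {n : ℕ} (K : Set (EuclideanSpace ℝ (Fin n))) (hK : IsClosed K)
    (q : EuclideanSpace ℝ (Fin n) → ℝ) (hq0 : ∀ z, 0 ≤ q z)
    (hqsymm : ∀ z, q z = q (-z))
    (x y : EuclideanSpace ℝ (Fin n)) (hx : x ∈ Kᶜ) (hy : y ∈ Kᶜ) :
    ghost K q x y = ghost K q y x := by
  unfold ghost
  by_cases h : y = x
  · subst h; rfl
  · rw [if_neg h, if_neg (Ne.symm h), ell_symm_aux K x y h, Set.indicator_of_mem hx,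
      Set.indicator_of_mem hy, hqsymm, norm_sub_rev x y, ← smul_neg, ← smul_neg, neg_sub]
end

section
/- Let K ⊆ ℝⁿ be a closed set, let x ∈ Kᶜ and let q : ℝⁿ → [0, ∞) be measurable. Then for every measurable set A ⊆ ℝⁿ, Q_K(x, A) = Q(x, T^K_x(A ∩ Kᶜ)), i.e. ∫_A q_K(x, y) dy = ∫_{T^K_x(A ∩ Kᶜ)} q(y − x) dy. -/
open MeasureTheory

open Set

lemma polar_lintegral {n : ℕ} (hn : n ≠ 0) (f : EuclideanSpace ℝ (Fin n) → ENNReal)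
    (hf : Measurable f) :
    ∫⁻ z, f z = ∫⁻ φ : Metric.sphere (0 : EuclideanSpace ℝ (Fin n)) 1,
      (∫⁻ r in Ioi (0:ℝ), ENNReal.ofReal (r ^ (n - 1)) * f (r • φ.1))
        ∂(volume : Measure (EuclideanSpace ℝ (Fin n))).toSphere := by
  have : NeZero n := ⟨hn⟩
  have hmp := (volume : Measure (EuclideanSpace ℝ (Fin n))).measurePreserving_homeomorphUnitSphereProd
  have hfr : Module.finrank ℝ (EuclideanSpace ℝ (Fin n)) = n := by simp
  rw [hfr] at hmp
  have hg : Measurable (fun p : Metric.sphere (0 : EuclideanSpace ℝ (Fin n)) 1 × Ioi (0:ℝ) =>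
      f (p.2.1 • p.1.1)) := by fun_prop
  calc ∫⁻ z, f z = ∫⁻ z : ({(0)}ᶜ : Set (EuclideanSpace ℝ (Fin n))), f z.1
        ∂((volume : Measure (EuclideanSpace ℝ (Fin n))).comap Subtype.val) := by
        rw [lintegral_subtype_comap (measurableSet_singleton _).compl f,
          restrict_compl_singleton]
    _ = ∫⁻ p, f (p.2.1 • p.1.1) ∂((volume : Measure (EuclideanSpace ℝ (Fin n))).toSphere.prod
          (.volumeIoiPow (n - 1))) := by
        rw [← hmp.lintegral_comp hg]
        refine lintegral_congr fun z => ?_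
        congr 1
        have h0 : ‖z.1‖ ≠ 0 := norm_ne_zero_iff.2 z.2
        simp [homeomorphUnitSphereProd, smul_smul, h0]
    _ = _ := by
        rw [lintegral_prod _ hg.aemeasurable]
        refine lintegral_congr fun φ => ?_
        rw [Measure.volumeIoiPow, lintegral_withDensity_eq_lintegral_mul]
        · exact lintegral_subtype_comap measurableSet_Ioi
            (fun r => ENNReal.ofReal (r ^ (n - 1)) * f (r • φ.1))
        · fun_prop
        · fun_prop

lemma ell_meas {n : ℕ} (K : Set (EuclideanSpace ℝ (Fin n))) (hK : IsClosed K)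
    (x : EuclideanSpace ℝ (Fin n)) :
    Measurable (fun y => ell K x (‖y - x‖⁻¹ • (y - x)) ‖y - x‖) := by
  have h1 : ∀ y, ell K x (‖y - x‖⁻¹ • (y - x)) ‖y - x‖ =
      ∫ t : ℝ, Set.indicator {p : EuclideanSpace ℝ (Fin n) × ℝ | 0 < p.2 ∧ p.2 ≤ ‖p.1 - x‖ ∧
        x + p.2 • (‖p.1 - x‖⁻¹ • (p.1 - x)) ∈ Kᶜ} (fun _ => (1:ℝ)) (y, t) := by
    intro y
    rw [ell, intervalIntegral.integral_of_le (norm_nonneg _), ← integral_indicator measurableSet_Ioc]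
    congr 1
    ext t
    simp only [Set.indicator, mem_Ioc, Set.mem_ofPred_eq]
    by_cases h : 0 < t <;> by_cases h' : t ≤ ‖y - x‖ <;> simp [h, h'] <;> congr 1 <;> simp [h, h']
  simp_rw [h1]
  refine (StronglyMeasurable.integral_prod_right (f := fun y t => Set.indicator {p : EuclideanSpace ℝ (Fin n) × ℝ | 0 < p.2 ∧ p.2 ≤ ‖p.1 - x‖ ∧
        x + p.2 • (‖p.1 - x‖⁻¹ • (p.1 - x)) ∈ Kᶜ} (fun _ => (1:ℝ)) (y, t)) ?_).measurable
  refine (Measurable.indicator measurable_const ?_).stronglyMeasurable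
  refine (measurableSet_lt measurable_const measurable_snd).inter
    ((measurableSet_le measurable_snd (by fun_prop)).inter ?_)
  exact (show Measurable (fun p : EuclideanSpace ℝ (Fin n) × ℝ =>
    x + p.2 • (‖p.1 - x‖⁻¹ • (p.1 - x))) by fun_prop) hK.measurableSet.compl

section
variable {n : ℕ} {K : Set (EuclideanSpace ℝ (Fin n))} (hK : IsClosed K)
    (x φ : EuclideanSpace ℝ (Fin n))

lemma ind_meas (hK : IsClosed K) :
    Measurable (fun t : ℝ => Set.indicator Kᶜ (fun _ => (1:ℝ)) (x + t • φ)) :=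
  (Measurable.indicator measurable_const hK.measurableSet.compl).comp
    (show Measurable fun t : ℝ => x + t • φ by fun_prop)

lemma ind_nonneg (t : ℝ) : 0 ≤ Set.indicator Kᶜ (fun _ => (1:ℝ)) (x + t • φ) :=
  Set.indicator_nonneg (fun _ _ => zero_le_one) _

lemma ind_int (hK : IsClosed K) (a b : ℝ) :
    IntervalIntegrable (fun t : ℝ => Set.indicator Kᶜ (fun _ => (1:ℝ)) (x + t • φ)) volume a b := by
  refine (intervalIntegrable_const (c := (1:ℝ))).mono_fun (ind_meas x φ hK).aestronglyMeasurable ?_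
  filter_upwards with t
  rw [Real.norm_of_nonneg (ind_nonneg x φ t), norm_one]
  exact Set.indicator_le_self' (fun _ _ => zero_le_one) _

lemma ell_deriv (hK : IsClosed K) (r : ℝ) (hr : x + r • φ ∈ Kᶜ) :
    HasDerivAt (ell K x φ) 1 r := by
  have hU : IsOpen {t : ℝ | x + t • φ ∈ Kᶜ} :=
    hK.isOpen_compl.preimage (show Continuous fun t : ℝ => x + t • φ by fun_prop)
  have h := intervalIntegral.integral_hasDerivAt_right (ind_int x φ hK 0 r)
    (ind_meas x φ hK).stronglyMeasurable.stronglyMeasurableAtFilter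
    (by
      refine (continuousAt_const (y := (1:ℝ))).congr ?_
      filter_upwards [hU.mem_nhds hr] with t ht
      exact (Set.indicator_of_mem (show x + t • φ ∈ Kᶜ from ht) (fun _ => (1:ℝ))).symm)
  rw [Set.indicator_of_mem hr] at h
  exact h

lemma ell_lt (hK : IsClosed K) {a b : ℝ} (hab : a < b) (hb : x + b • φ ∈ Kᶜ) :
    ell K x φ a < ell K x φ b := by
  have hU : IsOpen {t : ℝ | x + t • φ ∈ Kᶜ} :=
    hK.isOpen_compl.preimage (show Continuous fun t : ℝ => x + t • φ by fun_prop)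
  rw [← sub_pos, ell, ell, intervalIntegral.integral_interval_sub_left (ind_int x φ hK _ _)
    (ind_int x φ hK _ _), intervalIntegral.integral_pos_iff_support_of_nonneg_ae
    (by filter_upwards with t; exact ind_nonneg x φ t) (ind_int x φ hK _ _)]
  refine ⟨hab, ?_⟩
  have hne : ({t : ℝ | x + t • φ ∈ Kᶜ} ∩ Ioo a b).Nonempty := by
    have : b ∈ closure (Ioo a b) := by rw [closure_Ioo hab.ne]; exact right_mem_Icc.2 hab.le
    exact mem_closure_iff.1 this _ hU hb
  refine ((hU.inter isOpen_Ioo).measure_pos volume hne).trans_le (measure_mono ?_)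
  rintro t ⟨h1, h2⟩
  refine ⟨?_, Ioo_subset_Ioc_self h2⟩
  rw [Function.mem_support, Set.indicator_of_mem (show x + t • φ ∈ Kᶜ from h1)]
  exact one_ne_zero

lemma ell_zero : ell K x φ 0 = 0 := by simp [ell]

lemma ell_pos (hK : IsClosed K) {r : ℝ} (hr : 0 < r) (hb : x + r • φ ∈ Kᶜ) :
    0 < ell K x φ r := by
  have := ell_lt x φ hK hr hb
  rwa [ell_zero] at this

lemma ell_inj (hK : IsClosed K) {a b : ℝ} (ha : x + a • φ ∈ Kᶜ) (hb : x + b • φ ∈ Kᶜ)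
    (h : ell K x φ a = ell K x φ b) : a = b := by
  rcases lt_trichotomy a b with hab | hab | hab
  · exact absurd h (ell_lt x φ hK hab hb).ne
  · exact hab
  · exact absurd h (ell_lt x φ hK hab ha).ne'

lemma Tmap_polar {r : ℝ} (hr : 0 < r) (hφ : ‖φ‖ = 1) :
    Tmap K x (x + r • φ) = x + ell K x φ r • φ := by
  have h0 : φ ≠ 0 := by rintro rfl; simp at hφ
  simp [Tmap, hr.ne', h0, norm_smul, hφ, abs_of_pos hr, smul_smul]

lemma ghost_polar (q : EuclideanSpace ℝ (Fin n) → ℝ) {r : ℝ} (hr : 0 < r) (hφ : ‖φ‖ = 1)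
    (hm : x + r • φ ∈ Kᶜ) :
    ghost K q x (x + r • φ) = q (ell K x φ r • φ) * (ell K x φ r / r) ^ (n - 1) := by
  have h0 : φ ≠ 0 := by rintro rfl; simp at hφ
  have hm' : x + r • φ ∉ K := hm
  simp [ghost, hr.ne', h0, norm_smul, hφ, abs_of_pos hr, smul_smul, hm']

lemma polar_decomp {y : EuclideanSpace ℝ (Fin n)} (hy : y ≠ x) :
    ∃ r : ℝ, ∃ φ : EuclideanSpace ℝ (Fin n), 0 < r ∧ ‖φ‖ = 1 ∧ y = x + r • φ := by
  have h : ‖y - x‖ ≠ 0 := norm_ne_zero_iff.2 (sub_ne_zero.2 hy)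
  exact ⟨‖y - x‖, ‖y - x‖⁻¹ • (y - x), by positivity, by simp [norm_smul, h], by
    simp [smul_smul, h]⟩

lemma polar_unique {φ ψ : EuclideanSpace ℝ (Fin n)} {r s : ℝ} (hr : 0 < r) (hs : 0 < s)
    (hφ : ‖φ‖ = 1) (hψ : ‖ψ‖ = 1) (h : x + r • φ = x + s • ψ) : r = s ∧ φ = ψ := by
  have h := add_left_cancel h
  have h2 : r = s := by
    have := congrArg norm h
    simpa [norm_smul, hφ, hψ, abs_of_pos hr, abs_of_pos hs] using this
  subst h2
  exact ⟨rfl, smul_right_injective _ hr.ne' h⟩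

lemma Tmap_meas (hK : IsClosed K) : Measurable (Tmap K x) := by
  have := ell_meas K hK x
  unfold Tmap
  refine Measurable.ite (measurableSet_singleton x) measurable_const ?_
  fun_prop

lemma ghost_meas (hK : IsClosed K) (q : EuclideanSpace ℝ (Fin n) → ℝ) (hq : Measurable q) :
    Measurable (ghost K q x) := by
  have := ell_meas K hK x
  unfold ghost
  refine Measurable.ite (measurableSet_singleton x) measurable_const ?_
  refine Measurable.mul (by fun_prop) (measurable_const.indicator hK.measurableSet.compl)

lemma Tmap_injOn_s5 (hK : IsClosed K) : InjOn (Tmap K x) Kᶜ := by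
  have key : ∀ y ∈ Kᶜ, y ≠ x → Tmap K x y ≠ x := by
    intro y hy hyx h
    obtain ⟨r, φ, hr, hφ, rfl⟩ := polar_decomp x hyx
    rw [Tmap_polar x φ hr hφ] at h
    have h0 : φ ≠ 0 := by rintro rfl; simp at hφ
    simp [h0, (ell_pos x φ hK hr hy).ne'] at h
  have hxx : Tmap K x x = x := by simp [Tmap]
  intro y hy z hz h
  by_cases hyx : y = x
  · by_contra hne
    subst hyx
    exact key z hz (Ne.symm hne) (by rw [← h, hxx])
  by_cases hzx : z = x
  · subst hzx
    exact absurd (h.trans hxx) (key y hy hyx)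
  obtain ⟨r, φ, hr, hφ, rfl⟩ := polar_decomp x hyx
  obtain ⟨s, ψ, hs, hψ, rfl⟩ := polar_decomp x hzx
  rw [Tmap_polar x φ hr hφ, Tmap_polar x ψ hs hψ] at h
  obtain ⟨h1, h2⟩ := polar_unique x (ell_pos x φ hK hr hy) (ell_pos x ψ hK hs hz) hφ hψ h
  subst h2
  rw [ell_inj x φ hK hy hz h1]

end

theorem ghost_kernel_eq {n : ℕ} (K : Set (EuclideanSpace ℝ (Fin n))) (hK : IsClosed K)
    (x : EuclideanSpace ℝ (Fin n)) (hx : x ∈ Kᶜ)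
    (q : EuclideanSpace ℝ (Fin n) → ℝ) (hq0 : ∀ z, 0 ≤ q z) (hqm : Measurable q)
    (A : Set (EuclideanSpace ℝ (Fin n))) (hA : MeasurableSet A) :
    ∫⁻ y in A, ENNReal.ofReal (ghost K q x y) ∂volume
      = ∫⁻ y in Tmap K x '' (A ∩ Kᶜ), ENNReal.ofReal (q (y - x)) ∂volume := by
  have hAK : MeasurableSet (A ∩ Kᶜ) := hA.inter hK.measurableSet.compl
  by_cases hn : n = 0
  · subst hn
    have hT : Tmap K x = id := by
      ext1 y; exact Subsingleton.elim _ _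
    have hKu : Kᶜ = univ := by
      ext y; simpa [Subsingleton.elim y x] using hx
    rw [hT, hKu, inter_univ, image_id]
    refine lintegral_congr fun y => ?_
    rw [Subsingleton.elim y x]
    simp [ghost]
  have hTm : MeasurableSet (Tmap K x '' (A ∩ Kᶜ)) :=
    hAK.image_of_measurable_injOn (Tmap_meas x hK) ((Tmap_injOn_s5 x hK).mono inter_subset_right)
  have hgm := ghost_meas x hK q hqm
  rw [← lintegral_indicator hA, ← lintegral_indicator hTm,
    ← lintegral_add_left_eq_self _ x, ← lintegral_add_left_eq_self (indicator (Tmap K x '' _) _) x,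
    polar_lintegral hn (fun z => A.indicator (fun y => ENNReal.ofReal (ghost K q x y)) (x + z))
      ((hgm.ennreal_ofReal.indicator hA).comp (measurable_const_add x)),
    polar_lintegral hn (fun z => (Tmap K x '' (A ∩ Kᶜ)).indicator
      (fun y => ENNReal.ofReal (q (y - x))) (x + z)) (((by fun_prop : Measurable fun y =>
      ENNReal.ofReal (q (y - x))).indicator hTm).comp (measurable_const_add x))]
  refine lintegral_congr fun φ => ?_
  have hφ : ‖φ.1‖ = 1 := by simpa using φ.2
  obtain ⟨φ, hφ'⟩ := φ
  simp only at hφ ⊢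
  clear hφ'
  set B : Set ℝ := Ioi 0 ∩ (fun r : ℝ => x + r • φ) ⁻¹' (A ∩ Kᶜ) with hB
  have hBm : MeasurableSet B :=
    measurableSet_Ioi.inter ((show Measurable fun r : ℝ => x + r • φ by fun_prop) hAK)
  have himg : ell K x φ '' B = Ioi 0 ∩ (fun r : ℝ => x + r • φ) ⁻¹' (Tmap K x '' (A ∩ Kᶜ)) := by
    ext s
    constructor
    · rintro ⟨r, ⟨hr, hr2⟩, rfl⟩
      exact ⟨ell_pos x φ hK hr hr2.2, _, hr2, Tmap_polar x φ hr hφ⟩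
    · rintro ⟨hs, y, hy, hys⟩
      have hyx : y ≠ x := by
        rintro rfl
        have h0 : φ ≠ 0 := by rintro rfl; simp at hφ
        have hs' : s ≠ 0 := ne_of_gt hs
        simp [Tmap, h0, hs'] at hys
      obtain ⟨r, ψ, hr, hψ, rfl⟩ := polar_decomp x hyx
      rw [Tmap_polar x ψ hr hψ] at hys
      obtain ⟨h1, h2⟩ := polar_unique x (ell_pos x ψ hK hr hy.2) hs hψ hφ hys
      subst h2
      exact ⟨r, ⟨hr, hy⟩, h1⟩
  have hLm : MeasurableSet (ell K x φ '' B) := by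
    rw [himg]
    exact measurableSet_Ioi.inter ((show Measurable fun r : ℝ => x + r • φ by fun_prop) hTm)
  calc _ = ∫⁻ r in B, ENNReal.ofReal |(1:ℝ)| *
        (ENNReal.ofReal (ell K x φ r ^ (n - 1)) * ENNReal.ofReal (q (ell K x φ r • φ))) := by
        rw [← lintegral_indicator measurableSet_Ioi, ← lintegral_indicator hBm]
        refine lintegral_congr fun r => ?_
        by_cases hr : 0 < r
        swap
        · rw [indicator_of_notMem (by exact hr), indicator_of_notMem (fun h => hr h.1)]
        rw [indicator_of_mem (by exact hr)]
        by_cases hrA : x + r • φ ∈ A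
        swap
        · rw [indicator_of_notMem hrA, indicator_of_notMem (fun h => hrA h.2.1), mul_zero]
        rw [indicator_of_mem hrA]
        by_cases hrK : x + r • φ ∈ Kᶜ
        · rw [indicator_of_mem (show r ∈ B from ⟨hr, hrA, hrK⟩), ghost_polar x φ q hr hφ hrK]
          have hp := ell_pos x φ hK hr hrK
          rw [abs_one, ENNReal.ofReal_one, one_mul, ← ENNReal.ofReal_mul (by positivity),
            ← ENNReal.ofReal_mul (by positivity)]
          congr 1
          rw [div_pow]
          field_simp
        · rw [indicator_of_notMem (fun h => hrK h.2.2)]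
          have h0 : φ ≠ 0 := by rintro rfl; simp at hφ
          simp [ghost, hr.ne', h0, indicator_of_notMem hrK]
    _ = ∫⁻ s in ell K x φ '' B, ENNReal.ofReal (s ^ (n - 1)) * ENNReal.ofReal (q (s • φ)) :=
        (lintegral_image_eq_lintegral_abs_deriv_mul hBm
          (fun r hr => (ell_deriv x φ hK r hr.2.2).hasDerivWithinAt)
          (fun a ha b hb h => ell_inj x φ hK ha.2.2 hb.2.2 h)
          (fun s => ENNReal.ofReal (s ^ (n - 1)) * ENNReal.ofReal (q (s • φ)))).symm
    _ = _ := by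
        rw [← lintegral_indicator measurableSet_Ioi, ← lintegral_indicator hLm, himg]
        refine lintegral_congr fun r => ?_
        by_cases hr : 0 < r
        swap
        · rw [indicator_of_notMem (fun h => hr h.1), indicator_of_notMem (by exact hr)]
        rw [indicator_of_mem (show r ∈ Ioi 0 from hr)]
        by_cases hrA : x + r • φ ∈ Tmap K x '' (A ∩ Kᶜ)
        · rw [indicator_of_mem hrA, indicator_of_mem (by exact ⟨hr, hrA⟩), add_sub_cancel_left]
        · rw [indicator_of_notMem hrA, indicator_of_notMem (fun h => hrA h.2), mul_zero]
end

section
/- Let n, m ∈ ℕ, let C ∈ ℝ^{n×m} be a matrix each of whose columns sums to zero (an incidence matrix of a graph), let M > 0, D > 0, let f₁, …, fₙ > 0 be rating parameters, and let u ∈ ℝⁿ. Suppose ω : [0, ∞) → ℝⁿ and p : [0, ∞) → ℝ^m are differentiable and satisfy, for all j = 1, …, n and all t ≥ 0, fⱼ·M·ω̇ⱼ(t) = −fⱼ·D·ωⱼ(t) + uⱼ − (C p(t))ⱼ, with initial condition ω(0) = 0. Then the system frequency ω̄(t) := (Σⱼ fⱼ M ωⱼ(t))/(Σⱼ fⱼ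 M) satisfies ω̄(t) = g(t)·Σᵢ uᵢ for all t ≥ 0, where g(t) = (D·Σⱼ fⱼ)^{−1}·(1 − e^{−(D/M)t}). -/
open Matrix

/-- Closed-form expression for the system (center-of-inertia) frequency after a
step disturbance `u` under the linearized swing dynamics with proportional
inertia and damping `Mⱼ = fⱼM`, `Dⱼ = fⱼD`. -/
theorem system_frequency_closed_form (n m : ℕ)
    (C : Matrix (Fin n) (Fin m) ℝ) (hC : ∀ e : Fin m, ∑ j, C j e = 0)
    (M D : ℝ) (hM : 0 < M) (hD : 0 < D)
    (f : Fin n → ℝ) (hf : ∀ j, 0 < f j)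
    (u : Fin n → ℝ)
    (ω : ℝ → Fin n → ℝ) (p : ℝ → Fin m → ℝ)
    (hω : ∀ j, Differentiable ℝ (fun t => ω t j))
    (hp : ∀ e, Differentiable ℝ (fun t => p t e))
    (hdyn : ∀ j : Fin n, ∀ t : ℝ, 0 ≤ t →
      f j * M * deriv (fun s => ω s j) t
        = -(f j * D * ω t j) + u j - C.mulVec (p t) j)
    (hinit : ω 0 = 0) :
    ∀ t : ℝ, 0 ≤ t →
      (∑ j, f j * M * ω t j) / (∑ j, f j * M)
        = (D * ∑ j, f j)⁻¹ * (1 - Real.exp (-(D / M) * t)) * ∑ i, u i := by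
  intro t ht
  have hflow : ∀ s, ∑ j, C.mulVec (p s) j = 0 := by
    intro s
    simp only [Matrix.mulVec, dotProduct]
    rw [Finset.sum_comm]
    apply Finset.sum_eq_zero
    intro e _
    rw [← Finset.sum_mul, hC e, zero_mul]
  obtain ⟨W, hW⟩ : ∃ W : ℝ → ℝ, W = fun s => ∑ j, f j * ω s j := ⟨_, rfl⟩
  obtain ⟨U, hU⟩ : ∃ U : ℝ, U = ∑ i, u i := ⟨_, rfl⟩
  obtain ⟨W', hW'⟩ : ∃ W' : ℝ → ℝ, W' = fun s => ∑ j, f j * deriv (fun r => ω r j) s :=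
    ⟨_, rfl⟩
  have hd : ∀ s, HasDerivAt W (W' s) s := by
    intro s
    rw [hW, hW']
    exact HasDerivAt.fun_sum fun j _ => ((hω j s).hasDerivAt).const_mul (f j)
  have hode : ∀ s, 0 ≤ s → M * W' s = -(D * W s) + U := by
    intro s hs
    have h1 : ∑ j, f j * M * deriv (fun r => ω r j) s
        = ∑ j, (-(f j * D * ω s j) + u j - C.mulVec (p s) j) :=
      Finset.sum_congr rfl fun j _ => hdyn j s hs
    rw [Finset.sum_sub_distrib, hflow, Finset.sum_add_distrib, Finset.sum_neg_distrib,
      sub_zero, ← hU] at h1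
    simp only [hW, hW', Finset.mul_sum]
    convert h1 using 1
    · exact Finset.sum_congr rfl fun j _ => by ring
    · congr 2
      exact Finset.sum_congr rfl fun j _ => by ring
  have hH : ∀ s, HasDerivAt (fun r => (D * W r - U) * Real.exp (D / M * r))
      (D * W' s * Real.exp (D / M * s)
        + (D * W s - U) * (Real.exp (D / M * s) * (D / M * 1))) s := by
    intro s
    exact (((hd s).const_mul D).sub_const U).mul (((hasDerivAt_id s).const_mul (D / M)).exp)
  have hconst := constant_of_has_deriv_right_zero (a := 0) (b := t)
    (f := fun r => (D * W r - U) * Real.exp (D / M * r))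
    (fun s _ => (hH s).continuousAt.continuousWithinAt)
    (by
      intro s hs
      have h := (hH s).hasDerivWithinAt (s := Set.Ici s)
      convert h using 1
      have h2 : W' s = (-(D * W s) + U) / M := by
        rw [← hode s hs.1]; field_simp
      rw [h2]; field_simp; ring) t ⟨ht, le_rfl⟩
  have hW0 : W 0 = 0 := by simp [hW, hinit]
  simp only [hW0, mul_zero, Real.exp_zero, mul_one, zero_sub] at hconst
  have hsol : D * W t = U * (1 - Real.exp (-(D / M) * t)) := by
    have he : Real.exp (D / M * t) * Real.exp (-(D / M) * t) = 1 := by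
      rw [← Real.exp_add]; simp
    linear_combination Real.exp (-(D / M) * t) * hconst - (D * W t - U) * he
  have hnum : ∑ j, f j * M * ω t j = M * W t := by
    simp only [hW, Finset.mul_sum]
    exact Finset.sum_congr rfl fun j _ => by ring
  rw [hnum, ← Finset.sum_mul, ← hU]
  have hWt : W t = U * (1 - Real.exp (-(D / M) * t)) / D := by
    rw [← hsol]; field_simp
  rw [hWt, mul_inv, div_eq_mul_inv, mul_inv]
  field_simp
end
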